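/- Deterministic core of Proposition 3.4 (subspace estimation error of the spectral step): Let B̂ ∈ ℝ^{p×T} and let S ⊆ {1,…,T}. Suppose the submatrix of B̂ formed by the S-columns equals ĀΘ + N_S, where Ā ∈ ℝ^{p×r} has orthonormal columns, Θ ∈ ℝ^{r×|S|}, and ‖N_S‖ ≤ ν. Fix k̂ ≥ 0 and let Â ∈ ℝ^{p×k̂} consist of left singular vectors of B̂ associated with its k̂ largest singular values (from a singular value decomposition of B̂). Then ‖(I_p − ÂÂᵀ)Ā‖ · σ_r(Θ) ≤ σ_{k̂+1}(B̂) + ν. In particular, if σ_r(Θ) > 0, then ‖(I_p − ÂÂᵀ)Ā‖ ≤ (σ_{k̂+1}(B̂) + ν)/σ_r(Θ). -/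

import Mathlib

open Matrix
open scoped Matrix.Norms.L2Operator Classical

/-- `sv M k` is the `k`-th largest singular value of `M` (1-indexed), characterized as the
distance (in ℓ²→ℓ² operator norm) from `M` to the set of matrices of rank `< k`.
In particular `sv M k = 0` whenever `k` exceeds `min` of the dimensions. -/
noncomputable def sv {m n : Type*} [Fintype m] [Fintype n] [DecidableEq n]
    (M : Matrix m n ℝ) (k : ℕ) : ℝ :=
  sInf {c : ℝ | ∃ L : Matrix m n ℝ, L.rank < k ∧ ‖M - L‖ = c}

/-!
Write `P = 1 - ÂÂᵀ`, an orthogonal projection. Restricting to the columns in `S` gives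
`P Ā Θ = P B̂_S - P N_S`, so `‖P Ā Θ‖ ≤ ‖P B̂‖ + ν`.

On the left, `‖X‖ σ_r(Θ) ≤ ‖X Θ‖` for every `X` with `r` columns: subtracting from `Θ` the
rank-one matrix `y (Θᵀ y)ᵀ / ‖y‖²` makes `y` a left null vector, so the distance `σ_r(Θ)` to the
matrices of rank `< r` is at most the norm `‖Θᵀ y‖ / ‖y‖` of that correction; take `y = Xᵀ x`.

On the right, `P` deletes the leading `k̂` terms of the singular value decomposition, so `‖P B̂‖` is
at most the next diagonal entry. That this entry is at most the distance `σ_{k̂+1}(B̂)` is the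
easy half of Eckart-Young: compressing `B̂` to its leading `k̂ + 1` singular vectors does not
increase the distance, and gives a square diagonal matrix expanding every vector by at least that
entry, which is therefore at least that far from the singular matrices.
-/

open WithLp (toLp)

section Rank

variable {K m n : Type*} [Field K] [Fintype n]

lemma rank_lt_card_iff_exists_mulVec_eq_zero (A : Matrix m n K) :
    A.rank < Fintype.card n ↔ ∃ x ≠ 0, A *ᵥ x = 0 := by
  have rank_nullity : A.rank + Module.finrank K (LinearMap.ker A.mulVecLin) = Fintype.card n := by
    rw [← Module.finrank_fintype_fun_eq_card K]
    exact A.mulVecLin.finrank_range_add_finrank_ker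
  have rank_lt_iff : A.rank < Fintype.card n ↔
      0 < Module.finrank K (LinearMap.ker A.mulVecLin) := by omega
  rw [rank_lt_iff, Module.finrank_pos_iff, Submodule.nontrivial_iff_ne_bot, Submodule.ne_bot_iff]
  simp [and_comm]

end Rank

section SingularValueDecomposition

variable {R m n ι : Type*} [CommSemiring R] [Fintype ι] [DecidableEq ι]

lemma sum_smul_vecMulVec_eq_mul_diagonal_mul (d : ι → R) (u : ι → m → R) (v : ι → n → R) :
    ∑ j, d j • vecMulVec (u j) (v j) = (of u)ᵀ * diagonal d * of v := by
  ext i k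
  rw [Matrix.mul_apply, Matrix.sum_apply]
  refine Finset.sum_congr rfl fun j _ => ?_
  rw [mul_diagonal, Matrix.smul_apply, vecMulVec_apply, transpose_apply, of_apply, of_apply,
    smul_eq_mul]
  ring

end SingularValueDecomposition

section OrthonormalColumns

variable {R m ι κ : Type*} [CommRing R] [StarRing R] [Fintype m] [DecidableEq ι]
  {A : Matrix m ι R} {f : κ → ι}

lemma conjTranspose_mul_self_submatrix_id [DecidableEq κ] (hA : Aᴴ * A = 1)
    (hf : f.Injective) : (A.submatrix id f)ᴴ * A.submatrix id f = 1 := by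
  rw [conjTranspose_submatrix, ← submatrix_mul _ _ f id f Function.bijective_id, hA,
    submatrix_one f hf]

lemma isStarProjection_mul_conjTranspose [Fintype ι] (hA : Aᴴ * A = 1) :
    IsStarProjection (A * Aᴴ) where
  isIdempotentElem := by
    rw [IsIdempotentElem, Matrix.mul_assoc, ← Matrix.mul_assoc Aᴴ, hA, Matrix.one_mul]
  isSelfAdjoint := isHermitian_mul_conjTranspose_self A

lemma one_sub_submatrix_mul_conjTranspose_mul [DecidableEq m] [Fintype ι] [Fintype κ]
    (hA : Aᴴ * A = 1) (hf : f.Injective) :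
    (1 - A.submatrix id f * (A.submatrix id f)ᴴ) * A =
      A * diagonal ((Set.range f)ᶜ.indicator (1 : ι → R)) := by
  have gram_rows : (A.submatrix id f)ᴴ * A = (1 : Matrix ι ι R).submatrix f id := by
    rw [← hA, submatrix_mul _ _ f id id Function.bijective_id]
    rfl
  rw [Matrix.sub_mul, Matrix.one_mul, Matrix.mul_assoc, gram_rows]
  ext i j
  rw [Matrix.sub_apply, mul_diagonal, Matrix.mul_apply]
  by_cases hj : j ∈ Set.range f
  · obtain ⟨k, rfl⟩ := hj
    simp [one_apply, hf.eq_iff]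
  · have f_ne (k : κ) : f k ≠ j := fun h => hj ⟨k, h⟩
    simp [one_apply, hj, f_ne]

end OrthonormalColumns

section OperatorNorm

variable {𝕜 m n ι κ : Type*} [RCLike 𝕜] [Fintype m] [Fintype n] [Fintype ι] [Fintype κ]
  [DecidableEq n]

lemma norm_toLp_mulVec_le (A : Matrix m n 𝕜) (x : n → 𝕜) :
    ‖toLp 2 (A *ᵥ x)‖ ≤ ‖A‖ * ‖toLp 2 x‖ :=
  A.l2_opNorm_mulVec (toLp 2 x)

lemma l2_opNorm_le_of_forall_norm_mulVec_le {A : Matrix m n 𝕜} {c : ℝ} (hc : 0 ≤ c)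
    (h : ∀ x : n → 𝕜, ‖toLp 2 (A *ᵥ x)‖ ≤ c * ‖toLp 2 x‖) : ‖A‖ ≤ c :=
  ContinuousLinearMap.opNorm_le_bound _ hc fun x => h x.ofLp

lemma l2_opNorm_vecMulVec_star (x : m → 𝕜) (y : n → 𝕜) :
    ‖vecMulVec x (star y)‖ = ‖toLp 2 x‖ * ‖toLp 2 y‖ := by
  rw [← InnerProductSpace.norm_rankOne (𝕜 := 𝕜), l2_opNorm_def]
  have h := InnerProductSpace.symm_toEuclideanLin_rankOne (toLp 2 x) (toLp 2 y)
  rw [LinearEquiv.symm_apply_eq] at h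
  congr 1
  ext1 z
  exact (DFunLike.congr_fun h z).symm

lemma l2_opNorm_le_one_of_conjTranspose_mul_self {A : Matrix m n 𝕜} (hA : Aᴴ * A = 1) :
    ‖A‖ ≤ 1 := by
  have h : ‖A‖ * ‖A‖ ≤ 1 := by
    rw [← l2_opNorm_conjTranspose_mul_self, hA]
    exact IsStarProjection.norm_le _ (.one _)
  exact (abs_le_one_iff_mul_self_le_one.2 h).trans' (le_abs_self _)

lemma l2_opNorm_submatrix_id_le [DecidableEq ι] (A : Matrix m n 𝕜) {f : ι → n} (hf : f.Injective) :
    ‖A.submatrix id f‖ ≤ ‖A‖ := by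
  have selection_norm : ‖(1 : Matrix n n 𝕜).submatrix id f‖ ≤ 1 :=
    l2_opNorm_le_one_of_conjTranspose_mul_self (conjTranspose_mul_self_submatrix_id (by simp) hf)
  calc ‖A.submatrix id f‖ = ‖A * (1 : Matrix n n 𝕜).submatrix id f‖ := by
        rw [← submatrix_id_id A, ← submatrix_mul _ _ id id f Function.bijective_id,
          Matrix.mul_one]
        rfl
    _ ≤ ‖A‖ * ‖(1 : Matrix n n 𝕜).submatrix id f‖ := l2_opNorm_mul _ _
    _ ≤ ‖A‖ := mul_le_of_le_one_right (norm_nonneg _) selection_norm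

lemma l2_opNorm_mul_mul_le_of_le_one [DecidableEq m] [DecidableEq κ] {A : Matrix ι m 𝕜}
    {B : Matrix n κ 𝕜} (hA : ‖A‖ ≤ 1) (hB : ‖B‖ ≤ 1) (M : Matrix m n 𝕜) : ‖A * M * B‖ ≤ ‖M‖ :=
  calc ‖A * M * B‖ ≤ ‖A‖ * ‖M‖ * ‖B‖ :=
        (l2_opNorm_mul _ _).trans (by gcongr; exact l2_opNorm_mul _ _)
    _ ≤ ‖A‖ * ‖M‖ := mul_le_of_le_one_right (by positivity) hB
    _ ≤ ‖M‖ := mul_le_of_le_one_left (norm_nonneg _) hA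

lemma l2_opNorm_one_sub_submatrix_mul_svd_le [DecidableEq m] [DecidableEq ι]
    {U : Matrix m ι 𝕜} {V : Matrix n ι 𝕜} (hU : Uᴴ * U = 1) (hV : Vᴴ * V = 1) {f : κ → ι}
    (hf : f.Injective) {d : ι → 𝕜} {c : ℝ} (hc : 0 ≤ c) (hd : ∀ j ∉ Set.range f, ‖d j‖ ≤ c) :
    ‖(1 - U.submatrix id f * (U.submatrix id f)ᴴ) * (U * diagonal d * Vᴴ)‖ ≤ c := by
  have hV' : ‖Vᴴ‖ ≤ 1 := by
    rw [l2_opNorm_conjTranspose]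
    exact l2_opNorm_le_one_of_conjTranspose_mul_self hV
  calc ‖(1 - U.submatrix id f * (U.submatrix id f)ᴴ) * (U * diagonal d * Vᴴ)‖
      = ‖U * (diagonal ((Set.range f)ᶜ.indicator d) : Matrix ι ι 𝕜) * Vᴴ‖ := by
        rw [← Matrix.mul_assoc, ← Matrix.mul_assoc, one_sub_submatrix_mul_conjTranspose_mul hU hf,
          Matrix.mul_assoc U, diagonal_mul_diagonal]
        simp_rw [← Set.indicator_mul_left, Pi.one_apply, one_mul]
    _ ≤ ‖diagonal ((Set.range f)ᶜ.indicator d)‖ :=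
        l2_opNorm_mul_mul_le_of_le_one (l2_opNorm_le_one_of_conjTranspose_mul_self hU) hV' _
    _ ≤ c := by
        rw [l2_opNorm_diagonal, pi_norm_le_iff_of_nonneg hc]
        intro j
        by_cases hj : j ∈ Set.range f
        · simpa [hj] using hc
        · simpa [hj] using hd j hj

end OperatorNorm

section SingularValues

variable {l m n o : Type*} [Fintype l] [Fintype m] [Fintype n] [Fintype o] [DecidableEq n]

lemma sv_nonneg (M : Matrix m n ℝ) (k : ℕ) : 0 ≤ sv M k :=
  Real.sInf_nonneg fun _ ⟨_, _, h⟩ => h ▸ norm_nonneg _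

lemma sv_le_norm_sub {M L : Matrix m n ℝ} {k : ℕ} (hL : L.rank < k) : sv M k ≤ ‖M - L‖ :=
  csInf_le ⟨0, fun _ ⟨_, _, h⟩ => h ▸ norm_nonneg _⟩ ⟨L, hL, rfl⟩

lemma le_sv {M : Matrix m n ℝ} {k : ℕ} {c : ℝ} (hk : 0 < k)
    (h : ∀ L : Matrix m n ℝ, L.rank < k → c ≤ ‖M - L‖) : c ≤ sv M k :=
  le_csInf ⟨_, 0, by simpa using hk, rfl⟩ fun _ ⟨L, hL, hc⟩ => hc ▸ h L hL

lemma sv_mul_mul_le [DecidableEq m] [DecidableEq o] {A : Matrix l m ℝ} {B : Matrix n o ℝ}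
    (hA : ‖A‖ ≤ 1) (hB : ‖B‖ ≤ 1) (M : Matrix m n ℝ) (k : ℕ) : sv (A * M * B) k ≤ sv M k := by
  rcases k.eq_zero_or_pos with rfl | hk
  · simp [sv]
  refine le_sv hk fun L hL => ?_
  have hrank : (A * L * B).rank < k :=
    (rank_mul_le_left _ _).trans_lt ((rank_mul_le_right _ _).trans_lt hL)
  calc sv (A * M * B) k ≤ ‖A * M * B - A * L * B‖ := sv_le_norm_sub hrank
    _ = ‖A * (M - L) * B‖ := by rw [Matrix.mul_sub, Matrix.sub_mul]
    _ ≤ ‖M - L‖ := l2_opNorm_mul_mul_le_of_le_one hA hB _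

lemma le_sv_card_of_forall_le_norm_mulVec [Nonempty n] {M : Matrix m n ℝ} {c : ℝ}
    (h : ∀ x : n → ℝ, c * ‖toLp 2 x‖ ≤ ‖toLp 2 (M *ᵥ x)‖) : c ≤ sv M (Fintype.card n) := by
  refine le_sv Fintype.card_pos fun L hL => ?_
  obtain ⟨x, hx, hLx⟩ := (rank_lt_card_iff_exists_mulVec_eq_zero L).1 hL
  have norm_pos : 0 < ‖toLp 2 x‖ := by simpa using hx
  refine le_of_mul_le_mul_right ?_ norm_pos
  calc c * ‖toLp 2 x‖ ≤ ‖toLp 2 (M *ᵥ x)‖ := h x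
    _ = ‖toLp 2 ((M - L) *ᵥ x)‖ := by rw [sub_mulVec, hLx, sub_zero]
    _ ≤ ‖M - L‖ * ‖toLp 2 x‖ := norm_toLp_mulVec_le _ _

lemma le_sv_diagonal_card [Nonempty n] {d : n → ℝ} {c : ℝ} (hd : ∀ i, c ≤ |d i|) :
    c ≤ sv (diagonal d) (Fintype.card n) := by
  rcases lt_or_ge c 0 with hc | hc
  · exact hc.le.trans (sv_nonneg _ _)
  refine le_sv_card_of_forall_le_norm_mulVec fun x => ?_
  rw [← sq_le_sq₀ (by positivity) (norm_nonneg _), mul_pow, EuclideanSpace.norm_sq_eq,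
    EuclideanSpace.norm_sq_eq, Finset.mul_sum]
  refine Finset.sum_le_sum fun i _ => ?_
  simp only [mulVec_diagonal, norm_mul, mul_pow, Real.norm_eq_abs (d i)]
  gcongr
  exact hd i

lemma le_sv_svd {q : ℕ} {U : Matrix m (Fin q) ℝ} {V : Matrix n (Fin q) ℝ} (hU : Uᴴ * U = 1)
    (hV : Vᴴ * V = 1) {σ : Fin q → ℝ} (hσ : Antitone σ) (j : Fin q) :
    σ j ≤ sv (U * diagonal σ * Vᴴ) (j + 1) := by
  set f : Fin (j + 1) → Fin q := Fin.castLE j.isLt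
  have hf : f.Injective := Fin.castLE_injective _
  set U₁ := U.submatrix id f
  set V₁ := V.submatrix id f
  have hU₁ : ‖U₁ᴴ‖ ≤ 1 := by
    rw [l2_opNorm_conjTranspose]
    exact l2_opNorm_le_one_of_conjTranspose_mul_self (conjTranspose_mul_self_submatrix_id hU hf)
  have hV₁ : ‖V₁‖ ≤ 1 :=
    l2_opNorm_le_one_of_conjTranspose_mul_self (conjTranspose_mul_self_submatrix_id hV hf)
  have compression : U₁ᴴ * (U * diagonal σ * Vᴴ) * V₁ = diagonal (σ ∘ f) :=
    calc U₁ᴴ * (U * diagonal σ * Vᴴ) * V₁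
        = ((Uᴴ * U) * diagonal σ * (Vᴴ * V)).submatrix f f := by
          simp only [Matrix.mul_assoc]
          rfl
      _ = diagonal (σ ∘ f) := by
          rw [hU, hV, Matrix.one_mul, Matrix.mul_one, submatrix_diagonal _ _ hf]
  have entries_ge (i : Fin (j + 1)) : σ j ≤ |(σ ∘ f) i| :=
    (hσ (Fin.le_def.2 (Nat.lt_succ_iff.1 i.isLt))).trans (le_abs_self _)
  calc σ j ≤ sv (diagonal (σ ∘ f)) (j + 1) := by
        simpa using le_sv_diagonal_card entries_ge
    _ = sv (U₁ᴴ * (U * diagonal σ * Vᴴ) * V₁) (j + 1) := by rw [compression]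
    _ ≤ sv (U * diagonal σ * Vᴴ) (j + 1) := sv_mul_mul_le hU₁ hV₁ _ _

lemma sv_card_mul_norm_le_norm_transpose_mulVec (M : Matrix m n ℝ) (y : m → ℝ) :
    sv M (Fintype.card m) * ‖toLp 2 y‖ ≤ ‖toLp 2 (Mᵀ *ᵥ y)‖ := by
  rcases eq_or_ne y 0 with rfl | hy
  · simp
  have norm_pos : 0 < ‖toLp 2 y‖ := by simpa using hy
  have dot_self : y ⬝ᵥ y = ‖toLp 2 y‖ ^ 2 := by
    rw [EuclideanSpace.real_norm_sq_eq]
    simp only [dotProduct, sq]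
  set w := Mᵀ *ᵥ y
  set C : Matrix m n ℝ := (‖toLp 2 y‖ ^ 2)⁻¹ • vecMulVec y (star w) with hC
  have left_null : (M - C)ᵀ *ᵥ y = 0 := by
    rw [transpose_sub, sub_mulVec, hC, transpose_smul, transpose_vecMulVec, smul_mulVec,
      vecMulVec_mulVec, dot_self, op_smul_eq_smul, smul_smul, inv_mul_cancel₀ (by positivity),
      one_smul, star_trivial, sub_self]
  have hrank : (M - C).rank < Fintype.card m := by
    rw [← rank_transpose, rank_lt_card_iff_exists_mulVec_eq_zero]
    exact ⟨y, hy, left_null⟩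
  have norm_C : ‖C‖ = ‖toLp 2 w‖ / ‖toLp 2 y‖ := by
    rw [hC, norm_smul, l2_opNorm_vecMulVec_star, norm_inv, norm_pow, norm_norm]
    field_simp
  rw [← le_div_iff₀ norm_pos, ← norm_C]
  simpa using sv_le_norm_sub (M := M) hrank

lemma l2_opNorm_mul_sv_card_le [DecidableEq m] (X : Matrix l m ℝ) (M : Matrix m n ℝ) :
    ‖X‖ * sv M (Fintype.card m) ≤ ‖X * M‖ := by
  rcases (sv_nonneg M (Fintype.card m)).eq_or_lt with h0 | hpos
  · simp [← h0]
  rw [← le_div_iff₀ hpos, ← l2_opNorm_conjTranspose]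
  refine l2_opNorm_le_of_forall_norm_mulVec_le (by positivity) fun x => ?_
  rw [div_mul_eq_mul_div, le_div_iff₀ hpos, mul_comm]
  calc sv M (Fintype.card m) * ‖toLp 2 (Xᴴ *ᵥ x)‖ ≤ ‖toLp 2 (Mᵀ *ᵥ (Xᴴ *ᵥ x))‖ :=
        sv_card_mul_norm_le_norm_transpose_mulVec _ _
    _ = ‖toLp 2 ((X * M)ᴴ *ᵥ x)‖ := by
        rw [mulVec_mulVec, conjTranspose_mul, conjTranspose_eq_transpose_of_trivial M]
    _ ≤ ‖X * M‖ * ‖toLp 2 x‖ := by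
        rw [← l2_opNorm_conjTranspose (X * M)]
        exact norm_toLp_mulVec_le _ _

lemma l2_opNorm_one_sub_leading_mul_svd_le_sv [DecidableEq m] {q k : ℕ} {U : Matrix m (Fin q) ℝ}
    {V : Matrix n (Fin q) ℝ} (hU : Uᴴ * U = 1) (hV : Vᴴ * V = 1) {σ : Fin q → ℝ}
    (hσ : Antitone σ) (hσ0 : ∀ j, 0 ≤ σ j) (hk : k ≤ q) :
    ‖(1 - U.submatrix id (Fin.castLE hk) * (U.submatrix id (Fin.castLE hk))ᴴ) *
      (U * diagonal σ * Vᴴ)‖ ≤ sv (U * diagonal σ * Vᴴ) (k + 1) := by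
  refine l2_opNorm_one_sub_submatrix_mul_svd_le hU hV (Fin.castLE_injective hk) (sv_nonneg _ _)
    fun j hj => ?_
  have hkj : k ≤ j := by simpa [Fin.range_castLE] using hj
  rw [Real.norm_of_nonneg (hσ0 j)]
  calc σ j ≤ σ ⟨k, hkj.trans_lt j.isLt⟩ := hσ (Fin.le_def.2 hkj)
    _ ≤ sv (U * diagonal σ * Vᴴ) (k + 1) := le_sv_svd hU hV hσ _

end SingularValues

theorem subspace_estimation_error_core_general
    {m n ι ρ : Type*} [Fintype m] [Fintype n] [Fintype ι] [Fintype ρ]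
    [DecidableEq m] [DecidableEq n] [DecidableEq ι] [DecidableEq ρ]
    (Bhat : Matrix m n ℝ) {f : ι → n} (hf : f.Injective)
    (Abar : Matrix m ρ ℝ) (Θ : Matrix ρ ι ℝ) (N : Matrix m ι ℝ) {ν : ℝ} (hN : ‖N‖ ≤ ν)
    (hsub : Bhat.submatrix id f = Abar * Θ + N)
    {q : ℕ} (σ : Fin q → ℝ) (u : Fin q → m → ℝ) (v : Fin q → n → ℝ)
    (hσ : Antitone σ) (hσ0 : ∀ j, 0 ≤ σ j)
    (hu : ∀ j l, u j ⬝ᵥ u l = if j = l then (1 : ℝ) else 0)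
    (hv : ∀ j l, v j ⬝ᵥ v l = if j = l then (1 : ℝ) else 0)
    (hsvd : Bhat = ∑ j, σ j • vecMulVec (u j) (v j))
    {k : ℕ} (hk : k ≤ q) (Ahat : Matrix m (Fin k) ℝ)
    (hAhat : ∀ i j, Ahat i j = u (Fin.castLE hk j) i) :
    ‖(1 - Ahat * Ahatᵀ) * Abar‖ * sv Θ (Fintype.card ρ) ≤ sv Bhat (k + 1) + ν := by
  set U : Matrix m (Fin q) ℝ := (of u)ᵀ
  set V : Matrix n (Fin q) ℝ := (of v)ᵀ
  have hU : Uᴴ * U = 1 := ext hu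
  have hV : Vᴴ * V = 1 := ext hv
  have hB : Bhat = U * diagonal σ * Vᴴ := hsvd.trans (sum_smul_vecMulVec_eq_mul_diagonal_mul σ u v)
  obtain rfl : Ahat = U.submatrix id (Fin.castLE hk) := ext hAhat
  set P := 1 - U.submatrix id (Fin.castLE hk) * (U.submatrix id (Fin.castLE hk))ᵀ
  have norm_P : ‖P‖ ≤ 1 := IsStarProjection.norm_le _ (isStarProjection_mul_conjTranspose
    (conjTranspose_mul_self_submatrix_id hU (Fin.castLE_injective hk))).one_sub
  have norm_PB : ‖P * Bhat‖ ≤ sv Bhat (k + 1) :=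
    hB ▸ l2_opNorm_one_sub_leading_mul_svd_le_sv hU hV hσ hσ0 hk
  calc ‖P * Abar‖ * sv Θ (Fintype.card ρ) ≤ ‖P * Abar * Θ‖ := l2_opNorm_mul_sv_card_le _ _
    _ = ‖(P * Bhat).submatrix id f - P * N‖ := by
        rw [Matrix.mul_assoc, eq_sub_of_add_eq hsub.symm, Matrix.mul_sub]
        rfl
    _ ≤ ‖(P * Bhat).submatrix id f‖ + ‖P * N‖ := norm_sub_le _ _
    _ ≤ ‖P * Bhat‖ + ‖P‖ * ‖N‖ :=
        add_le_add (l2_opNorm_submatrix_id_le _ hf) (l2_opNorm_mul _ _)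
    _ ≤ sv Bhat (k + 1) + ν :=
        add_le_add norm_PB ((mul_le_of_le_one_left (norm_nonneg _) norm_P).trans hN)

/-- Deterministic core of Proposition 3.4 (subspace estimation error of the spectral step):
the `S`-columns of `B̂` equal `ĀΘ + N_S` with `Ā` having orthonormal columns and
`‖N_S‖ ≤ ν`; `Â` consists of the left singular vectors of `B̂` associated with its `k̂`
largest singular values (from a singular value decomposition of `B̂`).  Then
`‖(I_p − ÂÂᵀ)Ā‖ · σ_r(Θ) ≤ σ_{k̂+1}(B̂) + ν`, and if `σ_r(Θ) > 0` then
`‖(I_p − ÂÂᵀ)Ā‖ ≤ (σ_{k̂+1}(B̂) + ν)/σ_r(Θ)`. -/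
theorem subspace_estimation_error_core
    {p T : ℕ} (Bhat : Matrix (Fin p) (Fin T) ℝ)
    (S : Finset (Fin T)) (r : ℕ)
    (Abar : Matrix (Fin p) (Fin r) ℝ) (hAbar : Abar.transpose * Abar = 1)
    (Θ : Matrix (Fin r) {t // t ∈ S} ℝ) (NS : Matrix (Fin p) {t // t ∈ S} ℝ)
    (ν : ℝ) (hNS : ‖NS‖ ≤ ν)
    (hsub : Bhat.submatrix id (fun t : {t // t ∈ S} => (t : Fin T)) = Abar * Θ + NS)
    (σ : Fin (min p T) → ℝ) (u : Fin (min p T) → Fin p → ℝ)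
    (v : Fin (min p T) → Fin T → ℝ)
    (hσmono : Antitone σ) (hσ0 : ∀ j, 0 ≤ σ j)
    (hu : ∀ j l, u j ⬝ᵥ u l = if j = l then (1 : ℝ) else 0)
    (hv : ∀ j l, v j ⬝ᵥ v l = if j = l then (1 : ℝ) else 0)
    (hsvd : Bhat = ∑ j, σ j • Matrix.vecMulVec (u j) (v j))
    (khat : ℕ) (hkhat : khat ≤ min p T)
    (Ahat : Matrix (Fin p) (Fin khat) ℝ)
    (hA : ∀ i (j : Fin khat), Ahat i j = u (Fin.castLE hkhat j) i) :
    ‖(1 - Ahat * Ahat.transpose) * Abar‖ * sv Θ r ≤ sv Bhat (khat + 1) + ν ∧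
      (0 < sv Θ r →
        ‖(1 - Ahat * Ahat.transpose) * Abar‖ ≤ (sv Bhat (khat + 1) + ν) / sv Θ r) := by
  have bound := subspace_estimation_error_core_general Bhat Subtype.val_injective Abar Θ NS hNS hsub
    σ u v hσmono hσ0 hu hv hsvd hkhat Ahat hA
  rw [Fintype.card_fin] at bound
  exact ⟨bound, fun hpos => (le_div_iff₀ hpos).2 bound⟩
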